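/- If (u, v, θ) is a solution of the RNC system, then for every real number h the scaled triple (ũ, ṽ, θ̃) defined by ũ(x,y) = u(e^{−2h}x, e^{−h}y), ṽ(x,y) = e^{−h}·v(e^{−2h}x, e^{−h}y), θ̃(x,y) = e^{−2h}·θ(e^{−2h}x, e^{−h}y) is also a solution of the RNC system (invariance under the one-parameter group g₄ : (x,y,u,v,t) ↦ (x e^{2h}, y e^{h}, u, v e^{−h}, t e^{−2h}) generated by X₄ = 2x∂ₓ + y∂ᵧ − v∂ᵥ − 2t∂ₜ, where t denotes the temperature variable θ). -/

import Mathlib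

/-- Partial derivative with respect to the first variable `x`. -/
noncomputable def pdx (f : ℝ × ℝ → ℝ) (p : ℝ × ℝ) : ℝ := fderiv ℝ f p (1, 0)

/-- Partial derivative with respect to the second variable `y`. -/
noncomputable def pdy (f : ℝ × ℝ → ℝ) (p : ℝ × ℝ) : ℝ := fderiv ℝ f p (0, 1)

/-- The RNC system: `(u, v, θ)` are twice continuously differentiable and satisfy
(i) `uₓ + v_y = 0`, (ii) `u uₓ + v u_y = u_yy + Gr θ cos α`,
(iii) `u θₓ + v θ_y = (1/Pr)(1+4R) θ_yy`. -/
def IsRNCSolution (Gr α R Pr : ℝ) (u v θ : ℝ × ℝ → ℝ) : Prop :=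
  ContDiff ℝ 2 u ∧ ContDiff ℝ 2 v ∧ ContDiff ℝ 2 θ ∧
  (∀ p : ℝ × ℝ, pdx u p + pdy v p = 0) ∧
  (∀ p : ℝ × ℝ, u p * pdx u p + v p * pdy u p = pdy (pdy u) p + Gr * θ p * Real.cos α) ∧
  (∀ p : ℝ × ℝ, u p * pdx θ p + v p * pdy θ p = (1 / Pr) * (1 + 4 * R) * pdy (pdy θ) p)

/-- Chain rule for an anisotropic dilation of the variables combined with a scaling of the value. -/
lemma fderiv_const_mul_comp_dilation {f : ℝ × ℝ → ℝ} (hf : Differentiable ℝ f) (a b c : ℝ)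
    (p w : ℝ × ℝ) :
    fderiv ℝ (fun q : ℝ × ℝ => c * f (a * q.1, b * q.2)) p w =
      c * fderiv ℝ f (a * p.1, b * p.2) (a * w.1, b * w.2) := by
  have hdil : HasFDerivAt (fun q : ℝ × ℝ => (a * q.1, b * q.2))
      ((a • ContinuousLinearMap.fst ℝ ℝ ℝ).prod (b • ContinuousLinearMap.snd ℝ ℝ ℝ)) p :=
    (hasFDerivAt_fst.const_mul a).prodMk (hasFDerivAt_snd.const_mul b)
  have hcomp := ((hf (a * p.1, b * p.2)).hasFDerivAt.comp p hdil).const_mul c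
  have hfderiv : fderiv ℝ (fun q : ℝ × ℝ => c * f (a * q.1, b * q.2)) p = _ := hcomp.fderiv
  rw [hfderiv]
  simp

lemma pdx_const_mul_comp_dilation {f : ℝ × ℝ → ℝ} (hf : Differentiable ℝ f) (a b c : ℝ)
    (p : ℝ × ℝ) :
    pdx (fun q => c * f (a * q.1, b * q.2)) p = c * a * pdx f (a * p.1, b * p.2) := by
  have hvec : ((a * 1, b * 0) : ℝ × ℝ) = a • (1, 0) := by simp
  rw [pdx, fderiv_const_mul_comp_dilation hf, hvec, map_smul, smul_eq_mul, pdx, mul_assoc]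

lemma pdy_const_mul_comp_dilation {f : ℝ × ℝ → ℝ} (hf : Differentiable ℝ f) (a b c : ℝ)
    (p : ℝ × ℝ) :
    pdy (fun q => c * f (a * q.1, b * q.2)) p = c * b * pdy f (a * p.1, b * p.2) := by
  have hvec : ((a * 0, b * 1) : ℝ × ℝ) = b • (0, 1) := by simp
  rw [pdy, fderiv_const_mul_comp_dilation hf, hvec, map_smul, smul_eq_mul, pdy, mul_assoc]

lemma differentiable_pdy {f : ℝ × ℝ → ℝ} (hf : ContDiff ℝ 2 f) : Differentiable ℝ (pdy f) :=
  ((hf.fderiv_right (m := 1) (by norm_num)).clm_apply contDiff_const).differentiable (by norm_num)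

lemma pdy_pdy_const_mul_comp_dilation {f : ℝ × ℝ → ℝ} (hf : ContDiff ℝ 2 f) (a b c : ℝ)
    (p : ℝ × ℝ) :
    pdy (pdy (fun q => c * f (a * q.1, b * q.2))) p =
      c * b * b * pdy (pdy f) (a * p.1, b * p.2) := by
  rw [funext (pdy_const_mul_comp_dilation (hf.differentiable (by norm_num)) a b c),
    pdy_const_mul_comp_dilation (differentiable_pdy hf)]

lemma ContDiff.const_mul_comp_dilation {f : ℝ × ℝ → ℝ} (hf : ContDiff ℝ 2 f) (a b c : ℝ) :
    ContDiff ℝ 2 (fun q : ℝ × ℝ => c * f (a * q.1, b * q.2)) :=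
  contDiff_const.mul (hf.comp (by fun_prop))

/-- invariance of the RNC system under the scaling group
`g₄(h) : (x, y, u, v, t) ↦ (x e^{2h}, y e^h, u, v e^{-h}, t e^{-2h})`
generated by `X₄ = 2x∂ₓ + y∂ᵧ - v∂ᵥ - 2t∂ₜ`. -/
theorem rnc_invariant_under_g4 (Gr α R Pr : ℝ) (hPr : Pr ≠ 0)
    (u v θ : ℝ × ℝ → ℝ) (hsol : IsRNCSolution Gr α R Pr u v θ) (h : ℝ) :
    IsRNCSolution Gr α R Pr
      (fun p => u (Real.exp (-2 * h) * p.1, Real.exp (-h) * p.2))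
      (fun p => Real.exp (-h) * v (Real.exp (-2 * h) * p.1, Real.exp (-h) * p.2))
      (fun p => Real.exp (-2 * h) * θ (Real.exp (-2 * h) * p.1, Real.exp (-h) * p.2)) := by
  obtain ⟨hu, hv, hθ, hcont, hmom, hheat⟩ := hsol
  have hexp : Real.exp (-2 * h) = Real.exp (-h) * Real.exp (-h) := by
    rw [← Real.exp_add]; ring_nf
  rw [hexp]
  generalize Real.exp (-h) = b
  have hu' := hu.differentiable (by norm_num)
  have hv' := hv.differentiable (by norm_num)
  have hθ' := hθ.differentiable (by norm_num)
  have hone : (fun p : ℝ × ℝ => u (b * b * p.1, b * p.2)) =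
      fun p => 1 * u (b * b * p.1, b * p.2) := by simp only [one_mul]
  rw [hone]
  refine ⟨hu.const_mul_comp_dilation _ _ _, hv.const_mul_comp_dilation _ _ _,
    hθ.const_mul_comp_dilation _ _ _, fun p => ?_, fun p => ?_, fun p => ?_⟩
  · rw [pdx_const_mul_comp_dilation hu', pdy_const_mul_comp_dilation hv']
    linear_combination b * b * hcont (b * b * p.1, b * p.2)
  · rw [pdx_const_mul_comp_dilation hu', pdy_const_mul_comp_dilation hu',
      pdy_pdy_const_mul_comp_dilation hu]
    linear_combination b * b * hmom (b * b * p.1, b * p.2)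
  · rw [pdx_const_mul_comp_dilation hθ', pdy_const_mul_comp_dilation hθ',
      pdy_pdy_const_mul_comp_dilation hθ]
    linear_combination b ^ 4 * hheat (b * b * p.1, b * p.2)
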